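/- Let F be a deformation functor over Art_K. Then there exists a universal obstruction theory (O_F, ob_e) for F. Moreover, the universal obstruction theory is complete, and every element of the vector space O_F is of the form ob_e(a) for some small extension e : 0 → K → B → A → 0 with one-dimensional kernel and some a ∈ F(A). -/

import Mathlib

open CategoryTheory

universe u

/-- The category `Art_K` of commutative local Artinian `K`-algebras with residue field `K`. -/
structure ArtinAlg (K : Type u) [Field K] : Type (u + 1) where
  carrier : Type u
  [commRing : CommRing carrier]
  [algebra : Algebra K carrier]
  [artinian : IsArtinianRing carrier]
  [localRing : IsLocalRing carrier]
  residue_bij : Function.Bijective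
    ((IsLocalRing.residue carrier).comp (algebraMap K carrier))

attribute [instance] ArtinAlg.commRing ArtinAlg.algebra ArtinAlg.artinian ArtinAlg.localRing

instance (K : Type u) [Field K] : CoeSort (ArtinAlg K) (Type u) :=
  ⟨ArtinAlg.carrier⟩

instance (K : Type u) [Field K] : Category (ArtinAlg K) where
  Hom A B := A.carrier →ₐ[K] B.carrier
  id A := AlgHom.id K A.carrier
  comp f g := g.comp f

/-- Morphisms in `Art_K` are `K`-algebra homomorphisms. -/
def ArtinAlg.Hom.toAlgHom {K : Type u} [Field K] {A B : ArtinAlg K} (f : A ⟶ B) :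
    A.carrier →ₐ[K] B.carrier := f

instance {K : Type u} [Field K] {A B : ArtinAlg K} : FunLike (A ⟶ B) A B :=
  inferInstanceAs (FunLike (A.carrier →ₐ[K] B.carrier) A B)

instance {K : Type u} [Field K] {A B : ArtinAlg K} : AlgHomClass (A ⟶ B) K A B :=
  inferInstanceAs (AlgHomClass (A.carrier →ₐ[K] B.carrier) K A B)

/-- The field `K` itself, as the (terminal/initial) object of `Art_K`. -/
def ArtinAlg.self (K : Type u) [Field K] : ArtinAlg K where
  carrier := K
  residue_bij := by
    constructor
    · exact RingHom.injective _
    · intro y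
      obtain ⟨x, hx⟩ := Ideal.Quotient.mk_surjective (I := IsLocalRing.maximalIdeal K) y
      exact ⟨x, hx⟩

/-- A functor of Artin rings: a covariant functor `F : Art_K ⥤ Set` with `F(K)` a one-point
set. -/
def IsFunctorOfArtinRings {K : Type u} [Field K] (F : ArtinAlg K ⥤ Type u) : Prop :=
  Nonempty (F.obj (ArtinAlg.self K)) ∧ Subsingleton (F.obj (ArtinAlg.self K))

/-- Smoothness of a functor of Artin rings: `F(B) → F(A)` is surjective for every surjection
`B → A` in `Art_K`. -/
def IsSmoothFunctor {K : Type u} [Field K] (F : ArtinAlg K ⥤ Type u) : Prop :=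
  ∀ (B A : ArtinAlg K) (f : B ⟶ A), Function.Surjective f → Function.Surjective (F.map f)

/-- Smoothness of a morphism of functors of Artin rings: for every surjection `B → A` in
`Art_K` the induced map `F(B) → G(B) ×_{G(A)} F(A)` is surjective. -/
def IsSmoothMorphism {K : Type u} [Field K] {F G : ArtinAlg K ⥤ Type u} (φ : F ⟶ G) : Prop :=
  ∀ (B A : ArtinAlg K) (f : B ⟶ A), Function.Surjective f →
    ∀ (gb : G.obj B) (fa : F.obj A), G.map f gb = φ.app A fa →
      ∃ fb : F.obj B, φ.app B fb = gb ∧ F.map f fb = fa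
/-- A small extension `e : 0 → J → B → A → 0` in `Art_K`: a surjection `π : B → A` whose
kernel `J` is annihilated by the maximal ideal `m_B`. -/
structure SmallExtension (K : Type u) [Field K] where
  B : ArtinAlg K
  A : ArtinAlg K
  π : B ⟶ A
  surj : Function.Surjective π
  small : ∀ x : B, π x = 0 → ∀ y ∈ IsLocalRing.maximalIdeal B.carrier, y * x = 0

/-- The kernel `J` of a small extension, as a `K`-vector space. -/
def SmallExtension.J {K : Type u} [Field K] (e : SmallExtension K) :
    Submodule K e.B.carrier :=
  Submodule.restrictScalars K (RingHom.ker (ArtinAlg.Hom.toAlgHom e.π).toRingHom)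

/-- The map induced on the kernels by a morphism of small extensions. -/
def SmallExtension.kerMap {K : Type u} [Field K] {e₁ e₂ : SmallExtension K}
    (αB : e₁.B ⟶ e₂.B) (αA : e₁.A ⟶ e₂.A) (hc : αB ≫ e₂.π = e₁.π ≫ αA) :
    e₁.J →ₗ[K] e₂.J where
  toFun x := ⟨αB x.1, by
    have hx : e₁.π x.1 = 0 := by
      have hx0 := x.2
      simp only [SmallExtension.J, Submodule.restrictScalars_mem, RingHom.mem_ker] at hx0
      exact hx0
    have h' : e₂.π (αB x.1) = αA (e₁.π x.1) := DFunLike.congr_fun hc x.1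
    simp only [SmallExtension.J, Submodule.restrictScalars_mem, RingHom.mem_ker]
    show e₂.π (αB x.1) = 0
    rw [h', hx, map_zero]⟩
  map_add' x y := by
    ext
    exact map_add (ArtinAlg.Hom.toAlgHom αB) x.1 y.1
  map_smul' c x := by
    ext
    exact map_smul (ArtinAlg.Hom.toAlgHom αB).toLinearMap c x.1

/-- An obstruction theory `(V, v_e)` for a functor of Artin rings `F`. -/
structure ObstructionTheory {K : Type u} [Field K] (F : ArtinAlg K ⥤ Type u) :
    Type (u + 1) where
  V : Type u
  [addCommGroup : AddCommGroup V]
  [module : Module K V]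
  ob : ∀ e : SmallExtension K, F.obj e.A → TensorProduct K V e.J
  ob_eq_zero_of_lifts : ∀ (e : SmallExtension K) (a : F.obj e.A),
    (∃ b : F.obj e.B, F.map e.π b = a) → ob e a = 0
  base_change : ∀ (e₁ e₂ : SmallExtension K) (αB : e₁.B ⟶ e₂.B) (αA : e₁.A ⟶ e₂.A)
    (hc : αB ≫ e₂.π = e₁.π ≫ αA) (a : F.obj e₁.A),
    ob e₂ (F.map αA a) = LinearMap.lTensor V (SmallExtension.kerMap αB αA hc) (ob e₁ a)

attribute [instance] ObstructionTheory.addCommGroup ObstructionTheory.module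

/-- Completeness of an obstruction theory: an element lifts iff its obstruction vanishes. -/
def ObstructionTheory.Complete {K : Type u} [Field K] {F : ArtinAlg K ⥤ Type u}
    (OT : ObstructionTheory F) : Prop :=
  ∀ (e : SmallExtension K) (a : F.obj e.A), OT.ob e a = 0 → ∃ b : F.obj e.B, F.map e.π b = a
/-- `(D, p, q)` realizes the fiber product `B ×_A C` in `Art_K` (stated concretely on
underlying algebras). -/
structure IsFiberProductCone {K : Type u} [Field K] {A B C D : ArtinAlg K}
    (f : B ⟶ A) (g : C ⟶ A) (p : D ⟶ B) (q : D ⟶ C) : Prop where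
  comm : ∀ d : D, f (p d) = g (q d)
  inj : ∀ d₁ d₂ : D, p d₁ = p d₂ → q d₁ = q d₂ → d₁ = d₂
  surj : ∀ (b : B) (c : C), f b = g c → ∃ d : D, p d = b ∧ q d = c

/-- A deformation functor: a functor of Artin rings such that the natural map
`η : F(B ×_A C) → F(B) ×_{F(A)} F(C)` is surjective whenever `B → A` is surjective, and
bijective whenever `A = K`. -/
structure IsDeformationFunctor {K : Type u} [Field K] (F : ArtinAlg K ⥤ Type u) : Prop where
  nonempty_pt : Nonempty (F.obj (ArtinAlg.self K))
  subsingleton_pt : Subsingleton (F.obj (ArtinAlg.self K))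
  eta_surjective : ∀ {A B C D : ArtinAlg K} (f : B ⟶ A) (g : C ⟶ A) (p : D ⟶ B) (q : D ⟶ C),
    IsFiberProductCone f g p q → Function.Surjective f →
    ∀ (x : F.obj B) (y : F.obj C), F.map f x = F.map g y →
      ∃ d : F.obj D, F.map p d = x ∧ F.map q d = y
  eta_bijective : ∀ {B C D : ArtinAlg K} (f : B ⟶ ArtinAlg.self K)
    (g : C ⟶ ArtinAlg.self K) (p : D ⟶ B) (q : D ⟶ C),
    IsFiberProductCone f g p q →
    ∀ (x : F.obj B) (y : F.obj C), F.map f x = F.map g y →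
      ∃! d : F.obj D, F.map p d = x ∧ F.map q d = y

/-- A morphism of obstruction theories `(V, v_e) → (W, w_e)`: a linear map `ψ : V → W` with
`w_e = (ψ ⊗ id_J) ∘ v_e` for every small extension `e`. -/
def ObstructionTheory.IsMorphism {K : Type u} [Field K] {F : ArtinAlg K ⥤ Type u}
    (OT OT' : ObstructionTheory F) (ψ : OT.V →ₗ[K] OT'.V) : Prop :=
  ∀ (e : SmallExtension K) (a : F.obj e.A),
    OT'.ob e a = LinearMap.rTensor (↥e.J) ψ (OT.ob e a)

/-!
Contracting an obstruction in `V ⊗ J` with functionals on `J` turns an obstruction theory into a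
compatible family of linear maps `Jᵛ → V`, one for each small extension `e` and each `a ∈ F(A)`.
Such a map must kill every functional `l` for which `a` lifts to `B / ker l`. Surjectivity of `η`
shows that these functionals form a subspace of `Jᵛ`, and that it is all of `Jᵛ` only if `a` lifts
to `B`.

The universal obstruction space is therefore the colimit, over all pairs `(e, a)`, of the quotients
of `Jᵛ` by these subspaces. By bijectivity of `η` over `K` the colimit is directed, since products
over `K` dominate two pairs and two parallel morphisms induce the same map. The transition maps are
injective, so no further functional dies in the colimit: this is completeness. Finally, `Art_K` is
essentially small, which keeps the colimit in the universe of `K`.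
-/

universe w

open IsLocalRing

section Contraction

open TensorProduct

variable {R M N V W : Type*} [CommRing R] [AddCommGroup M] [Module R M] [AddCommGroup N]
  [Module R N] [AddCommGroup V] [Module R V] [AddCommGroup W] [Module R W]
  [Module.Finite R M] [Module.Projective R M] [Module.Finite R N] [Module.Projective R N]

/-- A tensor `t ∈ V ⊗ M`, with `M` finite projective, regarded as the linear map `Mᵛ → V` that
contracts the second factor of `t`. An obstruction in `V ⊗ J` is studied through this map. -/
noncomputable def contractEquiv : V ⊗[R] M ≃ₗ[R] Module.Dual R M →ₗ[R] V :=
  TensorProduct.comm R V M ≪≫ₗ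
    TensorProduct.congr (Module.evalEquiv R M) (LinearEquiv.refl R V) ≪≫ₗ
    dualTensorHomEquiv R (Module.Dual R M) V

theorem contractEquiv_apply (t : V ⊗[R] M) (l : Module.Dual R M) :
    contractEquiv t l = TensorProduct.rid R V (LinearMap.lTensor V l t) := by
  induction t with
  | zero => simp
  | tmul v m => simp [contractEquiv]
  | add s t hs ht => simp only [map_add, LinearMap.add_apply, hs, ht]

theorem contractEquiv_lTensor (f : M →ₗ[R] N) (t : V ⊗[R] M) (l : Module.Dual R N) :
    contractEquiv (LinearMap.lTensor V f t) l = contractEquiv t (l ∘ₗ f) := by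
  rw [contractEquiv_apply, contractEquiv_apply, LinearMap.lTensor_comp_apply]

theorem contractEquiv_rTensor (φ : V →ₗ[R] W) (t : V ⊗[R] M) :
    contractEquiv (LinearMap.rTensor M φ t) = φ ∘ₗ contractEquiv t := by
  ext l
  induction t with
  | zero => simp
  | tmul v m => simp [contractEquiv_apply]
  | add s t hs ht => simp only [map_add, LinearMap.add_apply, LinearMap.comp_add, hs, ht]

end Contraction

theorem small_directLimit_of_isCofinal {R ι : Type*} [Semiring R] [Preorder ι] [IsDirectedOrder ι]
    [Nonempty ι] [DecidableEq ι] {G : ι → Type*} [∀ i, AddCommMonoid (G i)] [∀ i, Module R (G i)]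
    (f : ∀ i j, i ≤ j → G i →ₗ[R] G j) {s : Set ι} (hs : IsCofinal s) [Small.{u} s]
    [∀ i, Small.{u} (G i)] : Small.{u} (Module.DirectLimit G f) := by
  refine small_of_surjective
    (f := fun x : Σ i : s, G i => Module.DirectLimit.of R ι G f x.1 x.2) fun z => ?_
  obtain ⟨i, x, rfl⟩ := Module.DirectLimit.exists_of z
  obtain ⟨j, hj, hij⟩ := hs i
  exact ⟨⟨⟨j, hj⟩, f i j hij x⟩, Module.DirectLimit.of_f⟩

instance essentiallySmall_arrow {C : Type*} [Category* C] [EssentiallySmall.{w} C] :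
    EssentiallySmall.{w} (Arrow C) := by
  have hC : ObjectProperty.EssentiallySmall.{w} (⊤ : ObjectProperty C) :=
    (essentiallySmall_iff_objectPropertyEssentiallySmall_top C).1 inferInstance
  have : LocallySmall.{w} (Comma (𝟭 C) (𝟭 C)) :=
    ⟨fun X Y => small_of_injective (f := fun g : X ⟶ Y => (g.left, g.right)) fun _ _ h =>
      CommaMorphism.ext (congrArg Prod.fst h) (congrArg Prod.snd h)⟩
  refine (essentiallySmall_iff_objectPropertyEssentiallySmall_top (Comma (𝟭 C) (𝟭 C))).2 ?_
  exact .of_le (Q := .comma (𝟭 C) (𝟭 C) ⊤ ⊤) fun _ _ => ⟨trivial, trivial⟩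

namespace ArtinAlg

variable {K : Type u} [Field K] {A B C : ArtinAlg K}

/-- The augmentation `A → A / m_A = K` of an object of `Art_K`. -/
noncomputable def aug (A : ArtinAlg K) : A.carrier →ₐ[K] K :=
  ((AlgEquiv.ofBijective (Algebra.ofId K (ResidueField A.carrier)) A.residue_bij).symm :
    ResidueField A.carrier →ₐ[K] K).comp (IsScalarTower.toAlgHom K A.carrier _)

theorem ker_algHom_eq_maximalIdeal (ε : A.carrier →ₐ[K] K) :
    RingHom.ker ε = maximalIdeal A.carrier :=
  IsLocalRing.ker_eq_maximalIdeal ε.toRingHom fun c => ⟨algebraMap K A.carrier c, ε.commutes c⟩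

theorem aug_eq_zero_iff {x : A} : A.aug x = 0 ↔ x ∈ maximalIdeal A.carrier := by
  rw [← ker_algHom_eq_maximalIdeal A.aug, RingHom.mem_ker]

theorem sub_algebraMap_aug_mem (x : A) :
    x - algebraMap K A.carrier (A.aug x) ∈ maximalIdeal A.carrier :=
  aug_eq_zero_iff.1 (by rw [map_sub, AlgHom.commutes, Algebra.algebraMap_self_apply, sub_self])

theorem algHom_eq_aug (ε : A.carrier →ₐ[K] K) : ε = A.aug := by
  ext x
  have hx := sub_algebraMap_aug_mem x
  rwa [← ker_algHom_eq_maximalIdeal ε, RingHom.mem_ker, map_sub, AlgHom.commutes,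
    sub_eq_zero] at hx

theorem aug_map (f : A ⟶ B) (x : A) : B.aug (f x) = A.aug x :=
  DFunLike.congr_fun (algHom_eq_aug (B.aug.comp (Hom.toAlgHom f))) x

instance (A : ArtinAlg K) : IsLocalHom A.aug where
  map_nonunit x hx := by
    by_contra hx'
    exact hx.ne_zero (aug_eq_zero_iff.2 hx')

instance finite (A : ArtinAlg K) : Module.Finite K A.carrier := by
  have : Module.Finite K (A.carrier ⧸ Ring.jacobson A.carrier) := by
    rw [IsLocalRing.ringJacobson_eq_maximalIdeal]
    exact Module.Finite.of_surjective
      (Algebra.linearMap K (A.carrier ⧸ maximalIdeal A.carrier)) A.residue_bij.2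
  exact IsSemiprimaryRing.finite_of_isArtinian K A.carrier A.carrier

/-- A finite-dimensional local `K`-algebra with an augmentation, as an object of `Art_K`. The
augmentation only serves to identify the residue field. -/
def ofAug (R : Type u) [CommRing R] [Algebra K R] [Module.Finite K R] [IsLocalRing R]
    (ε : R →ₐ[K] K) : ArtinAlg K where
  carrier := R
  artinian := IsArtinianRing.of_finite K R
  residue_bij := by
    refine ⟨RingHom.injective _, fun y => ?_⟩
    obtain ⟨x, rfl⟩ := IsLocalRing.residue_surjective y
    refine ⟨ε x, ?_⟩
    rw [RingHom.comp_apply, ← sub_eq_zero, ← map_sub, IsLocalRing.residue_eq_zero_iff,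
      ← IsLocalRing.ker_eq_maximalIdeal ε.toRingHom fun c => ⟨algebraMap K R c, ε.commutes c⟩,
      RingHom.mem_ker]
    simp

section Quotient

variable (A) (I : Ideal A.carrier) (hI : I ≤ RingHom.ker A.aug)

/-- The quotient of an object of `Art_K` by a proper ideal. -/
noncomputable def quotient : ArtinAlg K :=
  haveI : Module.Finite K (A.carrier ⧸ I) :=
    Module.Finite.of_surjective (Ideal.Quotient.mkₐ K I).toLinearMap Ideal.Quotient.mk_surjective
  haveI : Nontrivial (A.carrier ⧸ I) :=
    Ideal.Quotient.nontrivial_iff.2 (ne_top_of_le_ne_top (RingHom.ker_ne_top _) hI)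
  haveI : IsLocalRing (A.carrier ⧸ I) :=
    IsLocalRing.of_surjective' (Ideal.Quotient.mk I) Ideal.Quotient.mk_surjective
  ofAug (A.carrier ⧸ I) (Ideal.Quotient.liftₐ I A.aug hI)

/-- The quotient morphism `A → A / I`. -/
noncomputable def toQuotient : A ⟶ A.quotient I hI :=
  (Ideal.Quotient.mkₐ K I : A.carrier →ₐ[K] A.carrier ⧸ I)

theorem toQuotient_surjective : Function.Surjective (A.toQuotient I hI) :=
  Ideal.Quotient.mk_surjective

variable {A I hI}

theorem toQuotient_eq_zero_iff {x : A} : A.toQuotient I hI x = 0 ↔ x ∈ I :=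
  Ideal.Quotient.eq_zero_iff_mem

/-- The morphism `A / I → C` induced by a morphism `A → C` that vanishes on `I`. -/
noncomputable def quotientDesc (f : A ⟶ C) (hf : ∀ x ∈ I, f x = 0) : A.quotient I hI ⟶ C :=
  (Ideal.Quotient.liftₐ I (Hom.toAlgHom f) hf : A.carrier ⧸ I →ₐ[K] C.carrier)

end Quotient

section Prod

/-- The fibre product `B ×_K C`. -/
noncomputable def prod (B C : ArtinAlg K) : ArtinAlg K :=
  haveI : Module.Finite K (AlgHom.pullback B.aug C.aug) :=
    inferInstanceAs (Module.Finite K (Subalgebra.toSubmodule (AlgHom.pullback B.aug C.aug)))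
  haveI : IsLocalRing (AlgHom.pullback B.aug C.aug) := AlgHom.isLocalRing_pullback B.aug C.aug
  ofAug (AlgHom.pullback B.aug C.aug) (B.aug.comp (AlgHom.pullbackFst B.aug C.aug))

/-- The first projection of `B ×_K C`. -/
noncomputable def prodFst (B C : ArtinAlg K) : prod B C ⟶ B :=
  AlgHom.pullbackFst B.aug C.aug

/-- The second projection of `B ×_K C`. -/
noncomputable def prodSnd (B C : ArtinAlg K) : prod B C ⟶ C :=
  AlgHom.pullbackSnd B.aug C.aug

/-- The morphism to `B ×_K C` with given components. -/
noncomputable def prodLift (f : A ⟶ B) (g : A ⟶ C) : A ⟶ prod B C :=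
  (((Hom.toAlgHom f).prod (Hom.toAlgHom g)).codRestrict (AlgHom.pullback B.aug C.aug)
    fun x => (aug_map f x).trans (aug_map g x).symm)

theorem prod_ext {x y : prod B C} (h₁ : prodFst B C x = prodFst B C y)
    (h₂ : prodSnd B C x = prodSnd B C y) : x = y :=
  Subtype.ext (Prod.ext h₁ h₂)

theorem exists_prod (b : B) (c : C) (h : B.aug b = C.aug c) :
    ∃ d : prod B C, prodFst B C d = b ∧ prodSnd B C d = c :=
  ⟨⟨(b, c), h⟩, rfl, rfl⟩

theorem isFiberProductCone_prod (B C : ArtinAlg K) :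
    IsFiberProductCone (A := ArtinAlg.self K) B.aug C.aug (prodFst B C) (prodSnd B C) where
  comm d := (aug_map (prodFst B C) d).trans (aug_map (prodSnd B C) d).symm
  inj _ _ := prod_ext
  surj := exists_prod

end Prod

/-- An isomorphism of `Art_K` from an isomorphism of algebras. -/
def isoOfAlgEquiv (φ : A.carrier ≃ₐ[K] B.carrier) : A ≅ B where
  hom := (φ : A.carrier →ₐ[K] B.carrier)
  inv := (φ.symm : B.carrier →ₐ[K] A.carrier)
  hom_inv_id := AlgHom.ext φ.symm_apply_apply
  inv_hom_id := AlgHom.ext φ.apply_symm_apply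

theorem exists_presentation (A : ArtinAlg K) : ∃ r : Σ n : ℕ, Ideal (MvPolynomial (Fin n) K),
    Nonempty ((MvPolynomial (Fin r.1) K ⧸ r.2) ≃ₐ[K] A.carrier) := by
  obtain ⟨n, f, hf⟩ := Algebra.FiniteType.iff_quotient_mvPolynomial''.1
    (inferInstance : Algebra.FiniteType K A.carrier)
  exact ⟨⟨n, RingHom.ker f⟩, ⟨Ideal.quotientKerAlgEquivOfSurjective hf⟩⟩

instance : EssentiallySmall.{u} (ArtinAlg K) := by
  refine (essentiallySmall_iff _).2 ⟨?_, inferInstance⟩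
  choose relations presentation using exists_presentation (K := K)
  refine small_of_injective (f := fun X => relations ((fromSkeleton _).obj X)) fun X Y h => ?_
  beta_reduce at h
  obtain ⟨φ⟩ := presentation ((fromSkeleton _).obj X)
  obtain ⟨ψ⟩ := h ▸ presentation ((fromSkeleton _).obj Y)
  rw [← toSkeleton_fromSkeleton_obj X, ← toSkeleton_fromSkeleton_obj Y,
    toSkeleton_eq_toSkeleton_iff]
  exact ⟨isoOfAlgEquiv (φ.symm.trans ψ)⟩

end ArtinAlg

namespace SmallExtension

variable {K : Type u} [Field K] {e e₁ e₂ : SmallExtension K}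

/-- A morphism of small extensions: a commutative square between the two surjections. -/
@[ext]
structure Hom (e₁ e₂ : SmallExtension K) where
  toB : e₁.B ⟶ e₂.B
  toA : e₁.A ⟶ e₂.A
  w : toB ≫ e₂.π = e₁.π ≫ toA

instance : Category (SmallExtension K) where
  Hom := Hom
  id e := ⟨𝟙 e.B, 𝟙 e.A, rfl⟩
  comp f g := ⟨f.toB ≫ g.toB, f.toA ≫ g.toA, by
    rw [Category.assoc, g.w, ← Category.assoc, f.w, Category.assoc]⟩

@[simp] theorem id_toA (e : SmallExtension K) : Hom.toA (𝟙 e) = 𝟙 e.A := rfl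

@[simp] theorem comp_toA {e₃ : SmallExtension K} (f : e₁ ⟶ e₂) (g : e₂ ⟶ e₃) :
    (f ≫ g).toA = f.toA ≫ g.toA := rfl

theorem Hom.w_apply (f : e₁ ⟶ e₂) (x : e₁.B) : e₂.π (f.toB x) = f.toA (e₁.π x) :=
  DFunLike.congr_fun f.w x

/-- The linear map on kernels induced by a morphism of small extensions. -/
def Hom.onJ (f : e₁ ⟶ e₂) : e₁.J →ₗ[K] e₂.J :=
  kerMap f.toB f.toA f.w

theorem comp_onJ {e₃ : SmallExtension K} (f : e₁ ⟶ e₂) (g : e₂ ⟶ e₃) :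
    (f ≫ g).onJ = g.onJ ∘ₗ f.onJ := rfl

instance : Module.Finite K e.J :=
  inferInstanceAs (Module.Finite K (e.J : Submodule K e.B.carrier))

theorem mem_J {x : e.B} : x ∈ e.J ↔ e.π x = 0 := Iff.rfl

theorem aug_eq_zero_of_mem_J {x : e.B} (hx : x ∈ e.J) : e.B.aug x = 0 := by
  rw [← ArtinAlg.aug_map e.π, mem_J.1 hx, map_zero]

theorem mul_eq_aug_smul (y : e.B) {x : e.B} (hx : x ∈ e.J) : y * x = e.B.aug y • x := by
  rw [Algebra.smul_def, ← sub_eq_zero, ← sub_mul]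
  exact e.small x hx _ (ArtinAlg.sub_algebraMap_aug_mem y)

/-- The arrow in `Art_K` underlying a small extension. -/
def toArrow : SmallExtension K ⥤ Arrow (ArtinAlg K) where
  obj e := Arrow.mk e.π
  map f := Arrow.homMk f.toB f.toA f.w

instance : (toArrow (K := K)).Faithful where
  map_injective h := Hom.ext (congrArg CommaMorphism.left h) (congrArg CommaMorphism.right h)

instance : (toArrow (K := K)).Full where
  map_surjective f := ⟨⟨f.left, f.right, f.w⟩, rfl⟩

instance : EssentiallySmall.{u} (SmallExtension K) :=
  essentiallySmall_of_fully_faithful toArrow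

/-- The functor sending a small extension `0 → J → B → A → 0` to `A`. -/
def target (K : Type u) [Field K] : SmallExtension K ⥤ ArtinAlg K where
  obj e := e.A
  map f := f.toA

section Quotient

/-- A subspace of `J`, regarded as an ideal of `B`. -/
def ideal (N : Submodule K e.J) : Ideal e.B.carrier where
  __ := N.map e.J.subtype
  smul_mem' y := by
    rintro _ ⟨x, hx, rfl⟩
    exact ⟨e.B.aug y • x, N.smul_mem _ hx, (mul_eq_aug_smul y x.2).symm⟩

theorem mem_ideal {N : Submodule K e.J} {x : e.B} :
    x ∈ ideal N ↔ ∃ h : x ∈ e.J, (⟨x, h⟩ : e.J) ∈ N :=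
  ⟨fun ⟨x, hx, h⟩ => h ▸ ⟨x.2, hx⟩, fun ⟨h, hx⟩ => ⟨⟨x, h⟩, hx, rfl⟩⟩

theorem ideal_le_ker_aug (N : Submodule K e.J) : ideal N ≤ RingHom.ker e.B.aug :=
  fun _ hx => aug_eq_zero_of_mem_J (mem_ideal.1 hx).1

/-- The quotient `0 → J / N → B / N → A → 0` of a small extension by a subspace `N` of `J`. -/
noncomputable abbrev quot (e : SmallExtension K) (N : Submodule K e.J) : SmallExtension K where
  B := e.B.quotient (ideal N) (ideal_le_ker_aug N)
  A := e.A
  π := ArtinAlg.quotientDesc e.π fun _ hx => (mem_ideal.1 hx).1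
  surj a := (e.surj a).imp' (e.B.toQuotient _ _) fun _ => id
  small x hx y hy := by
    obtain ⟨x, rfl⟩ := e.B.toQuotient_surjective _ _ x
    obtain ⟨y, rfl⟩ := e.B.toQuotient_surjective _ _ y
    rw [← ArtinAlg.aug_eq_zero_iff, ArtinAlg.aug_map] at hy
    rw [← map_mul, mul_eq_aug_smul (e := e) y hx, hy, zero_smul, map_zero]

/-- The quotient morphism. -/
@[simps toA]
noncomputable def toQuot (e : SmallExtension K) (N : Submodule K e.J) : e ⟶ e.quot N where
  toB := e.B.toQuotient (ideal N) (ideal_le_ker_aug N)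
  toA := 𝟙 e.A
  w := rfl

variable {M N : Submodule K e.J}

theorem toQuot_toB_surjective : Function.Surjective (e.toQuot N).toB :=
  e.B.toQuotient_surjective _ (ideal_le_ker_aug N)

theorem toQuot_toB_eq_zero_iff {x : e.B} :
    (e.toQuot N).toB x = 0 ↔ ∃ h : x ∈ e.J, (⟨x, h⟩ : e.J) ∈ N :=
  (ArtinAlg.toQuotient_eq_zero_iff (hI := ideal_le_ker_aug N)).trans mem_ideal

theorem toQuot_toB_eq_iff {x y : e.B} :
    (e.toQuot N).toB x = (e.toQuot N).toB y ↔ ∃ n ∈ N, y + n = x := by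
  rw [← sub_eq_zero, ← map_sub, toQuot_toB_eq_zero_iff]
  exact ⟨fun ⟨h, hN⟩ => ⟨_, hN, add_sub_cancel _ _⟩,
    fun ⟨n, hn, h⟩ => by simpa [← h] using hn⟩

theorem toQuot_onJ_surjective : Function.Surjective (e.toQuot N).onJ := by
  rintro ⟨y, hy⟩
  obtain ⟨x, rfl⟩ := toQuot_toB_surjective y
  exact ⟨⟨x, hy⟩, rfl⟩

theorem ker_toQuot_onJ : LinearMap.ker (e.toQuot N).onJ = N := by
  ext x
  rw [LinearMap.mem_ker, ← Subtype.coe_inj]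
  exact toQuot_toB_eq_zero_iff.trans ⟨fun ⟨_, h⟩ => h, fun h => ⟨x.2, h⟩⟩

theorem exists_comp_toQuot_onJ {l : Module.Dual K e.J} (h : N ≤ LinearMap.ker l) :
    ∃ l' : Module.Dual K (e.quot N).J, l' ∘ₗ (e.toQuot N).onJ = l := by
  have hl : l ∈ (LinearMap.ker (e.toQuot N).onJ).dualAnnihilator :=
    (Submodule.mem_dualAnnihilator l).2 fun x hx => h (ker_toQuot_onJ.le hx)
  rwa [← LinearMap.range_dualMap_eq_dualAnnihilator_ker] at hl

theorem bijective_of_comp_toQuot_onJ_eq {l : Module.Dual K e.J} (hl : l ≠ 0)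
    {l' : Module.Dual K (e.quot (LinearMap.ker l)).J}
    (h : l' ∘ₗ (e.toQuot (LinearMap.ker l)).onJ = l) : Function.Bijective l' := by
  constructor
  · refine (injective_iff_map_eq_zero _).2 fun y hy => ?_
    obtain ⟨x, rfl⟩ := toQuot_onJ_surjective y
    exact LinearMap.mem_ker.1 (ker_toQuot_onJ.ge ((LinearMap.congr_fun h x).symm.trans hy))
  · refine LinearMap.surjective fun h₀ => hl ?_
    rw [← h, h₀, LinearMap.zero_comp]

/-- The morphism out of `e.quot N` induced by a morphism out of `e` that kills `N`. -/
@[simps toA]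
noncomputable def quotDesc (f : e ⟶ e₂) (h : N ≤ LinearMap.ker f.onJ) : e.quot N ⟶ e₂ where
  toB := ArtinAlg.quotientDesc (hI := ideal_le_ker_aug N) f.toB fun x hx => by
    obtain ⟨hJ, hN⟩ := mem_ideal.1 hx
    exact congrArg Subtype.val (h hN : f.onJ ⟨x, hJ⟩ = 0)
  toA := f.toA
  w := AlgHom.ext fun y => by
    obtain ⟨x, rfl⟩ := toQuot_toB_surjective y
    exact f.w_apply x

/-- The morphism of quotients induced by a morphism of small extensions. -/
noncomputable def quotMap (f : e ⟶ e₂) {N : Submodule K e₂.J} (h : M ≤ N.comap f.onJ) :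
    e.quot M ⟶ e₂.quot N :=
  quotDesc (f ≫ e₂.toQuot N) <| by
    rwa [comp_onJ, LinearMap.ker_comp, ker_toQuot_onJ]

end Quotient

section Prod

/-- The product `0 → J₁ × J₂ → B₁ ×_K B₂ → A₁ ×_K A₂ → 0` of two small extensions. -/
noncomputable def prod (e₁ e₂ : SmallExtension K) : SmallExtension K where
  B := ArtinAlg.prod e₁.B e₂.B
  A := ArtinAlg.prod e₁.A e₂.A
  π := ArtinAlg.prodLift (ArtinAlg.prodFst _ _ ≫ e₁.π) (ArtinAlg.prodSnd _ _ ≫ e₂.π)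
  surj a := by
    obtain ⟨b₁, h₁⟩ := e₁.surj (ArtinAlg.prodFst _ _ a)
    obtain ⟨b₂, h₂⟩ := e₂.surj (ArtinAlg.prodSnd _ _ a)
    obtain ⟨b, rfl, rfl⟩ := ArtinAlg.exists_prod b₁ b₂ <| by
      rw [← ArtinAlg.aug_map e₁.π, ← ArtinAlg.aug_map e₂.π, h₁, h₂, ArtinAlg.aug_map,
        ArtinAlg.aug_map]
    exact ⟨b, ArtinAlg.prod_ext h₁ h₂⟩
  small x hx y hy := by
    rw [← ArtinAlg.aug_eq_zero_iff] at hy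
    have hx₁ : ArtinAlg.prodFst _ _ x ∈ e₁.J := congrArg (ArtinAlg.prodFst _ _) hx
    have hx₂ : ArtinAlg.prodSnd _ _ x ∈ e₂.J := congrArg (ArtinAlg.prodSnd _ _) hx
    refine ArtinAlg.prod_ext ?_ ?_
    · rw [map_mul, mul_eq_aug_smul _ hx₁, ArtinAlg.aug_map, hy, zero_smul, map_zero]
    · rw [map_mul, mul_eq_aug_smul _ hx₂, ArtinAlg.aug_map, hy, zero_smul, map_zero]

/-- The first projection of a product of small extensions. -/
noncomputable def fst (e₁ e₂ : SmallExtension K) : prod e₁ e₂ ⟶ e₁ where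
  toB := ArtinAlg.prodFst _ _
  toA := ArtinAlg.prodFst _ _
  w := rfl

/-- The second projection of a product of small extensions. -/
noncomputable def snd (e₁ e₂ : SmallExtension K) : prod e₁ e₂ ⟶ e₂ where
  toB := ArtinAlg.prodSnd _ _
  toA := ArtinAlg.prodSnd _ _
  w := rfl

/-- The morphism to a product of small extensions with given components. -/
noncomputable def prodLift (f : e ⟶ e₁) (g : e ⟶ e₂) : e ⟶ prod e₁ e₂ where
  toB := ArtinAlg.prodLift f.toB g.toB
  toA := ArtinAlg.prodLift f.toA g.toA
  w := AlgHom.ext fun x => ArtinAlg.prod_ext (f.w_apply x) (g.w_apply x)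

theorem prodLift_fst (f : e ⟶ e₁) (g : e ⟶ e₂) : prodLift f g ≫ fst e₁ e₂ = f := rfl

theorem prodLift_snd (f : e ⟶ e₁) (g : e ⟶ e₂) : prodLift f g ≫ snd e₁ e₂ = g := rfl

end Prod

section Lifting

variable {F : ArtinAlg K ⥤ Type u} {a : F.obj e.A} {M N : Submodule K e.J}

/-- The element `a ∈ F(A)` lifts to `F(B)`. -/
def Lifts (e : SmallExtension K) (a : F.obj e.A) : Prop :=
  ∃ b : F.obj e.B, F.map e.π b = a

theorem Lifts.map (f : e ⟶ e₂) (h : e.Lifts a) : e₂.Lifts (F.map f.toA a) := by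
  obtain ⟨b, rfl⟩ := h
  exact ⟨F.map f.toB b, by rw [← F.map_comp_apply, f.w, F.map_comp_apply]⟩

theorem lifts_of_subsingleton_J [Subsingleton e.J] (a : F.obj e.A) : e.Lifts a := by
  have hinj : Function.Injective e.π := (injective_iff_map_eq_zero e.π).2 fun x hx =>
    congrArg Subtype.val (Subsingleton.elim (⟨x, hx⟩ : e.J) 0)
  let i := ArtinAlg.isoOfAlgEquiv (AlgEquiv.ofBijective (ArtinAlg.Hom.toAlgHom e.π) ⟨hinj, e.surj⟩)
  exact ⟨F.map i.inv a, (F.mapIso i).inv_hom_id_apply a⟩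

theorem lifts_quot_top (a : F.obj e.A) : (e.quot ⊤).Lifts a := by
  have : Subsingleton (e.quot ⊤).J := subsingleton_of_forall_eq 0 fun y => by
    obtain ⟨x, rfl⟩ := toQuot_onJ_surjective y
    exact LinearMap.mem_ker.1 (ker_toQuot_onJ.ge Submodule.mem_top)
  exact lifts_of_subsingleton_J (e := e.quot ⊤) a

theorem lifts_quot_bot_iff : (e.quot ⊥).Lifts a ↔ e.Lifts a := by
  refine ⟨fun h => ?_, fun h => ?_⟩
  · simpa using h.map (quotDesc (𝟙 e) bot_le)
  · simpa using h.map (e.toQuot ⊥)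

theorem lifts_quot_map (f : e ⟶ e₂) {N : Submodule K e₂.J} (hMN : M ≤ N.comap f.onJ)
    (h : (e.quot M).Lifts a) : (e₂.quot N).Lifts (F.map f.toA a) :=
  h.map (quotMap f hMN)

theorem lifts_quot_mono (hMN : M ≤ N) (h : (e.quot M).Lifts a) : (e.quot N).Lifts a := by
  simpa using lifts_quot_map (𝟙 e) hMN h

theorem isFiberProductCone_quotMap (f : e ⟶ e₂) {N : Submodule K e₂.J}
    (hMN : M.map f.onJ ⊔ N = ⊤) :
    IsFiberProductCone (e₂.quot N).π ((e.quot M).π ≫ f.toA)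
      (quotMap f (inf_le_right : M ⊓ N.comap f.onJ ≤ _)).toB
      (quotMap (𝟙 e) (inf_le_left : M ⊓ N.comap f.onJ ≤ M)).toB where
  comm d := by
    obtain ⟨x, rfl⟩ := toQuot_toB_surjective d
    exact f.w_apply x
  inj d₁ d₂ h₁ h₂ := by
    rw [← sub_eq_zero] at h₁ h₂ ⊢
    rw [← map_sub] at h₁ h₂
    obtain ⟨x, hx⟩ := toQuot_toB_surjective (d₁ - d₂)
    rw [← hx] at h₁ h₂ ⊢
    obtain ⟨hJ, hM⟩ := toQuot_toB_eq_zero_iff.1 h₂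
    obtain ⟨_, hN⟩ := toQuot_toB_eq_zero_iff.1 h₁
    exact toQuot_toB_eq_zero_iff.2 ⟨hJ, hM, hN⟩
  surj b c hbc := by
    obtain ⟨y, rfl⟩ := toQuot_toB_surjective b
    obtain ⟨x, rfl⟩ := toQuot_toB_surjective c
    have hy : y - f.toB x ∈ e₂.J := by
      rw [mem_J, map_sub, f.w_apply, sub_eq_zero]
      exact hbc
    obtain ⟨_, ⟨m, hm, rfl⟩, n, hn, hmn⟩ :=
      Submodule.mem_sup.1 (hMN ▸ Submodule.mem_top : (⟨_, hy⟩ : e₂.J) ∈ _)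
    refine ⟨(e.toQuot _).toB (x + m), toQuot_toB_eq_iff.2 ⟨-n, N.neg_mem hn, ?_⟩,
      toQuot_toB_eq_iff.2 ⟨m, hm, rfl⟩⟩
    have hmn' : f.toB m + n = y - f.toB x := congrArg Subtype.val hmn
    change y + -(n : e₂.B) = f.toB (x + m)
    rw [map_add]
    linear_combination -hmn'

theorem lifts_quot_inf_comap (hF : IsDeformationFunctor F) (f : e ⟶ e₂) {N : Submodule K e₂.J}
    (hMN : M.map f.onJ ⊔ N = ⊤) (hM : (e.quot M).Lifts a)
    (hN : (e₂.quot N).Lifts (F.map f.toA a)) : (e.quot (M ⊓ N.comap f.onJ)).Lifts a := by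
  obtain ⟨c, rfl⟩ := hM
  obtain ⟨b, hb⟩ := hN
  rw [← F.map_comp_apply] at hb
  obtain ⟨d, -, rfl⟩ :=
    hF.eta_surjective _ _ _ _ (isFiberProductCone_quotMap f hMN) (e₂.quot N).surj b c hb
  refine ⟨d, ?_⟩
  rw [← F.map_comp_apply, Hom.w, F.map_comp_apply]
  exact (F.map_id_apply _ _).symm

theorem lifts_quot_inf_comap_ker (hF : IsDeformationFunctor F) (f : e ⟶ e₂)
    {l : Module.Dual K e₂.J} (hM : (e.quot M).Lifts a)
    (hl : (e₂.quot (LinearMap.ker l)).Lifts (F.map f.toA a)) :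
    (e.quot (M ⊓ LinearMap.ker (l ∘ₗ f.onJ))).Lifts a := by
  rw [LinearMap.ker_comp]
  by_cases hle : M.map f.onJ ≤ LinearMap.ker l
  · rwa [inf_eq_left.2 (Submodule.map_le_iff_le_comap.1 hle)]
  · have hl₀ : l ≠ 0 := by
      rintro rfl
      exact hle (le_top.trans_eq LinearMap.ker_zero.symm)
    have hcoatom : IsCoatom (LinearMap.ker l) :=
      LinearMap.isCoatom_ker_of_surjective (LinearMap.surjective hl₀)
    exact lifts_quot_inf_comap hF f (hcoatom.not_le_iff_codisjoint.1 hle).symm.eq_top hM hl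

theorem lifts_quot_ker_comp_iff (hF : IsDeformationFunctor F) (f : e ⟶ e₂)
    {l : Module.Dual K e₂.J} :
    (e.quot (LinearMap.ker (l ∘ₗ f.onJ))).Lifts a ↔
      (e₂.quot (LinearMap.ker l)).Lifts (F.map f.toA a) := by
  refine ⟨lifts_quot_map f le_rfl, fun h => ?_⟩
  rw [← top_inf_eq (LinearMap.ker _)]
  exact lifts_quot_inf_comap_ker hF f (lifts_quot_top a) h

theorem lifts_quot_inf_ker (hF : IsDeformationFunctor F) {l : Module.Dual K e.J}
    (hM : (e.quot M).Lifts a) (hl : (e.quot (LinearMap.ker l)).Lifts a) :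
    (e.quot (M ⊓ LinearMap.ker l)).Lifts a :=
  lifts_quot_inf_comap_ker hF (𝟙 e) hM (by simpa using hl)

theorem lifts_of_forall_lifts_quot_ker (hF : IsDeformationFunctor F)
    (h : ∀ l : Module.Dual K e.J, (e.quot (LinearMap.ker l)).Lifts a) : e.Lifts a := by
  obtain ⟨N, hN, hmin⟩ :=
    wellFounded_lt.has_min {N : Submodule K e.J | (e.quot N).Lifts a} ⟨⊤, lifts_quot_top a⟩
  have hle (l : Module.Dual K e.J) : N ≤ LinearMap.ker l :=
    inf_eq_left.1 (inf_le_left.eq_of_not_lt (hmin _ (lifts_quot_inf_ker hF hN (h l))))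
  have hbot : N = ⊥ := (Submodule.eq_bot_iff N).2 fun x hx =>
    (Module.forall_dual_apply_eq_zero_iff K x).1 fun l => hle l hx
  exact lifts_quot_bot_iff.1 (hbot ▸ hN)

/-- The functionals `l` on `J` such that `a` lifts to `F(B / ker l)`: those that kill the
obstruction of `a` in every obstruction theory. -/
def liftable (hF : IsDeformationFunctor F) (e : SmallExtension K) (a : F.obj e.A) :
    Submodule K (Module.Dual K e.J) where
  carrier := {l | (e.quot (LinearMap.ker l)).Lifts a}
  zero_mem' := by
    rw [Set.mem_ofPred_eq, LinearMap.ker_zero]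
    exact lifts_quot_top a
  add_mem' hl hm := lifts_quot_mono (fun x hx => by simp_all) (lifts_quot_inf_ker hF hl hm)
  smul_mem' c l hl := lifts_quot_mono (fun x hx => by simp_all) hl

theorem mem_liftable {hF : IsDeformationFunctor F} {l : Module.Dual K e.J} :
    l ∈ liftable hF e a ↔ (e.quot (LinearMap.ker l)).Lifts a := Iff.rfl

theorem comp_mem_liftable_iff {hF : IsDeformationFunctor F} (f : e ⟶ e₂)
    {l : Module.Dual K e₂.J} :
    l ∘ₗ f.onJ ∈ liftable hF e a ↔ l ∈ liftable hF e₂ (F.map f.toA a) :=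
  lifts_quot_ker_comp_iff hF f

theorem liftable_eq_top_iff {hF : IsDeformationFunctor F} : liftable hF e a = ⊤ ↔ e.Lifts a :=
  ⟨fun h => lifts_of_forall_lifts_quot_ker hF fun _ => mem_liftable.1 (h ▸ Submodule.mem_top),
    fun h => Submodule.eq_top_iff'.2 fun _ => lifts_quot_mono bot_le (lifts_quot_bot_iff.2 h)⟩

theorem existsUnique_prod (hF : IsDeformationFunctor F) (a₁ : F.obj e₁.A) (a₂ : F.obj e₂.A) :
    ∃! d : F.obj (prod e₁ e₂).A, F.map (fst e₁ e₂).toA d = a₁ ∧ F.map (snd e₁ e₂).toA d = a₂ :=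
  hF.eta_bijective _ _ _ _ (ArtinAlg.isFiberProductCone_prod e₁.A e₂.A) a₁ a₂
    (hF.subsingleton_pt.elim _ _)

theorem map_prodLift_eq (hF : IsDeformationFunctor F) (f g : e ⟶ e₂)
    (h : F.map f.toA a = F.map g.toA a) :
    F.map (prodLift f g).toA a = F.map (prodLift (𝟙 e₂) (𝟙 e₂)).toA (F.map f.toA a) := by
  refine (existsUnique_prod hF (F.map f.toA a) (F.map g.toA a)).unique ⟨?_, ?_⟩ ⟨?_, ?_⟩ <;>
    rw [← F.map_comp_apply, ← comp_toA]
  · rw [prodLift_fst]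
  · rw [prodLift_snd]
  · rw [prodLift_fst, id_toA, F.map_id_apply]
  · rw [prodLift_snd, id_toA, F.map_id_apply, h]

theorem comp_onJ_sub_comp_onJ_mem_liftable (hF : IsDeformationFunctor F) (f g : e ⟶ e₂)
    (h : F.map f.toA a = F.map g.toA a) (l : Module.Dual K e₂.J) :
    l ∘ₗ f.onJ - l ∘ₗ g.onJ ∈ liftable hF e a := by
  let d : Module.Dual K (prod e₂ e₂).J := l ∘ₗ (fst e₂ e₂).onJ - l ∘ₗ (snd e₂ e₂).onJ
  have hd : d ∘ₗ (prodLift (𝟙 e₂) (𝟙 e₂)).onJ = 0 := sub_self l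
  have hfg : d ∘ₗ (prodLift f g).onJ = l ∘ₗ f.onJ - l ∘ₗ g.onJ := rfl
  rw [← hfg, comp_mem_liftable_iff, map_prodLift_eq hF f g h, ← comp_mem_liftable_iff, hd]
  exact zero_mem _

end Lifting

end SmallExtension

section Universal

open SmallExtension

variable {K : Type u} [Field K] {F : ArtinAlg K ⥤ Type u}

/-- Pairs `(e, a)` of a small extension `e : 0 → J → B → A → 0` and an element `a ∈ F(A)`, as a
category. -/
abbrev PointedExtension (F : ArtinAlg K ⥤ Type u) : Type (u + 1) :=
  (target K ⋙ F).Elements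

namespace PointedExtension

variable {p q : PointedExtension F}

/-- `p ≤ q` when there is a morphism `q ⟶ p`, so that functionals on kernels can be pulled back
from `p` to `q`. -/
instance : Preorder (PointedExtension F) where
  le p q := Nonempty (q ⟶ p)
  le_refl p := ⟨𝟙 p⟩
  le_trans _ _ _ := fun ⟨f⟩ ⟨g⟩ => ⟨g ≫ f⟩

noncomputable instance : DecidableEq (PointedExtension F) :=
  Classical.decEq _

theorem isDirectedOrder (hF : IsDeformationFunctor F) : IsDirectedOrder (PointedExtension F) where
  directed p q := by
    obtain ⟨d, ⟨h₁, h₂⟩, -⟩ := existsUnique_prod hF p.2 q.2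
    exact ⟨⟨prod p.1 q.1, d⟩, ⟨⟨fst p.1 q.1, h₁⟩⟩, ⟨⟨snd p.1 q.1, h₂⟩⟩⟩

theorem isCofinal_range_fromSkeleton :
    IsCofinal (Set.range (fromSkeleton (PointedExtension F)).obj) := fun p =>
  ⟨_, ⟨toSkeleton p, rfl⟩, ⟨(fromSkeletonToSkeletonIso p).hom⟩⟩

/-- The functionals on the kernel of a pointed extension `(e, a)`, modulo those that any
obstruction theory must send to zero. -/
abbrev Obs (hF : IsDeformationFunctor F) (p : PointedExtension F) : Type u :=
  Module.Dual K p.1.J ⧸ liftable hF p.1 p.2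

/-- The pullback of obstruction functionals along a morphism of pointed extensions. -/
def obsMap (hF : IsDeformationFunctor F) (f : q ⟶ p) : Obs hF p →ₗ[K] Obs hF q :=
  Submodule.mapQ _ _ f.1.onJ.dualMap fun _ hl =>
    (comp_mem_liftable_iff f.1).2 (f.2.symm ▸ hl)

theorem obsMap_injective (hF : IsDeformationFunctor F) (f : q ⟶ p) :
    Function.Injective (obsMap hF f) := by
  refine (injective_iff_map_eq_zero _).2 fun x hx => ?_
  obtain ⟨l, rfl⟩ := Submodule.mkQ_surjective _ x
  rw [Submodule.mkQ_apply, Submodule.Quotient.mk_eq_zero, ← f.2]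
  exact (comp_mem_liftable_iff f.1).1 ((Submodule.Quotient.mk_eq_zero _).1 hx)

theorem obsMap_eq (hF : IsDeformationFunctor F) (f g : q ⟶ p) : obsMap hF f = obsMap hF g := by
  ext l : 2
  exact (Submodule.Quotient.eq _).2
    (comp_onJ_sub_comp_onJ_mem_liftable hF f.1 g.1 (f.2.trans g.2.symm) l)

/-- The transition maps of the directed system `Obs hF`. -/
noncomputable def transition (hF : IsDeformationFunctor F) (p q : PointedExtension F) (h : p ≤ q) :
    Obs hF p →ₗ[K] Obs hF q :=
  obsMap hF h.some

theorem transition_mkQ (hF : IsDeformationFunctor F) (f : q ⟶ p) (l : Module.Dual K p.1.J) :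
    transition hF p q ⟨f⟩ (Submodule.mkQ _ l) = Submodule.mkQ _ (l ∘ₗ f.1.onJ) :=
  LinearMap.congr_fun (obsMap_eq hF _ f) _

theorem directedSystem (hF : IsDeformationFunctor F) :
    DirectedSystem (Obs hF) (transition hF · · ·) where
  map_self p x := by
    obtain ⟨l, rfl⟩ := Submodule.mkQ_surjective _ x
    exact transition_mkQ hF (𝟙 p) l
  map_map r q p := by
    rintro ⟨f⟩ ⟨g⟩ x
    obtain ⟨l, rfl⟩ := Submodule.mkQ_surjective _ x
    rw [transition_mkQ, transition_mkQ]
    exact (transition_mkQ hF (g ≫ f) l).symm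

theorem nonempty (hF : IsDeformationFunctor F) : Nonempty (PointedExtension F) := by
  obtain ⟨x⟩ := hF.nonempty_pt
  let e : SmallExtension K :=
    { B := ArtinAlg.self K
      A := ArtinAlg.self K
      π := 𝟙 _
      surj := fun a => ⟨a, rfl⟩
      small := fun x hx y _ => by rw [show x = 0 from hx, mul_zero] }
  exact ⟨⟨e, x⟩⟩

instance small_directLimit_obs (hF : IsDeformationFunctor F) :
    Small.{u} (Module.DirectLimit (Obs hF) (transition hF)) := by
  have := isDirectedOrder hF
  have := nonempty hF
  exact small_directLimit_of_isCofinal (transition hF) isCofinal_range_fromSkeleton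

noncomputable instance (hF : IsDeformationFunctor F) :
    AddCommGroup (Module.DirectLimit (Obs hF) (transition hF)) :=
  Module.DirectLimit.addCommGroup (Obs hF) (transition hF)

/-- The universal obstruction space: the colimit of the spaces `Obs hF p`, moved to the universe
of `K`. -/
def Space (hF : IsDeformationFunctor F) : Type u :=
  Shrink.{u} (Module.DirectLimit (Obs hF) (transition hF))

noncomputable instance (hF : IsDeformationFunctor F) : AddCommGroup (Space hF) :=
  inferInstanceAs (AddCommGroup (Shrink (Module.DirectLimit (Obs hF) (transition hF))))

noncomputable instance (hF : IsDeformationFunctor F) : Module K (Space hF) :=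
  inferInstanceAs (Module K (Shrink (Module.DirectLimit (Obs hF) (transition hF))))

/-- The identification of the universal obstruction space with the colimit. -/
noncomputable def spaceEquiv (hF : IsDeformationFunctor F) :
    Module.DirectLimit (Obs hF) (transition hF) ≃ₗ[K] Space hF :=
  (Shrink.linearEquiv K _).symm

/-- The class of a functional on `J` in the universal obstruction space. -/
noncomputable def toSpace (hF : IsDeformationFunctor F) (p : PointedExtension F) :
    Module.Dual K p.1.J →ₗ[K] Space hF :=
  (spaceEquiv hF).toLinearMap ∘ₗ
    Module.DirectLimit.of K _ (Obs hF) (transition hF) p ∘ₗ Submodule.mkQ _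

theorem toSpace_comp_onJ (hF : IsDeformationFunctor F) (f : q ⟶ p) (l : Module.Dual K p.1.J) :
    toSpace hF q (l ∘ₗ f.1.onJ) = toSpace hF p l := by
  rw [toSpace, toSpace, LinearMap.comp_apply, LinearMap.comp_apply, LinearMap.comp_apply,
    LinearMap.comp_apply, ← transition_mkQ, Module.DirectLimit.of_f]

theorem ker_toSpace (hF : IsDeformationFunctor F) (p : PointedExtension F) :
    LinearMap.ker (toSpace hF p) = liftable hF p.1 p.2 := by
  have := isDirectedOrder hF
  have := directedSystem hF
  ext l
  refine (spaceEquiv hF).map_eq_zero_iff.trans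
    (Iff.trans ⟨fun h => ?_, fun h => ?_⟩ (Submodule.Quotient.mk_eq_zero _))
  · obtain ⟨q, hpq, hq⟩ := Module.DirectLimit.of.zero_exact h
    exact (map_eq_zero_iff _ (obsMap_injective hF hpq.some)).1 hq
  · exact (congrArg (Module.DirectLimit.of K _ (Obs hF) (transition hF) p) h).trans (map_zero _)

theorem toSpace_eq_zero_iff (hF : IsDeformationFunctor F) {p : PointedExtension F} :
    toSpace hF p = 0 ↔ p.1.Lifts p.2 := by
  rw [← LinearMap.ker_eq_top, ker_toSpace]
  exact liftable_eq_top_iff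

theorem exists_toSpace_eq (hF : IsDeformationFunctor F) (v : Space hF) :
    ∃ (p : PointedExtension F) (l : Module.Dual K p.1.J), toSpace hF p l = v := by
  have := isDirectedOrder hF
  have := nonempty hF
  obtain ⟨p, x, hx⟩ := Module.DirectLimit.exists_of ((spaceEquiv hF).symm v)
  obtain ⟨l, rfl⟩ := Submodule.mkQ_surjective _ x
  exact ⟨p, l, (LinearEquiv.eq_symm_apply _).1 hx⟩

theorem exists_comp_toSpace_eq (hF : IsDeformationFunctor F) {W : Type*} [AddCommGroup W]
    [Module K W] (θ : ∀ p : PointedExtension F, Module.Dual K p.1.J →ₗ[K] W)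
    (hθ : ∀ ⦃p q : PointedExtension F⦄ (f : q ⟶ p) (l : Module.Dual K p.1.J),
      θ q (l ∘ₗ f.1.onJ) = θ p l)
    (hθ₀ : ∀ p : PointedExtension F, liftable hF p.1 p.2 ≤ LinearMap.ker (θ p)) :
    ∃ ψ : Space hF →ₗ[K] W, ∀ p, ψ ∘ₗ toSpace hF p = θ p := by
  let g (p : PointedExtension F) : Obs hF p →ₗ[K] W := Submodule.liftQ _ (θ p) (hθ₀ p)
  have hg (p q : PointedExtension F) (h : p ≤ q) (x : Obs hF p) :
      g q (transition hF p q h x) = g p x := by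
    obtain ⟨l, rfl⟩ := Submodule.mkQ_surjective _ x
    exact hθ h.some l
  refine ⟨Module.DirectLimit.lift K _ (Obs hF) (transition hF) g hg ∘ₗ
    (spaceEquiv hF).symm.toLinearMap, fun p => LinearMap.ext fun l => ?_⟩
  refine (congrArg _ (LinearEquiv.symm_apply_apply _ _)).trans ?_
  exact Module.DirectLimit.lift_of g hg _

end PointedExtension

open PointedExtension

theorem ObstructionTheory.contractEquiv_ob_comp_onJ (OT : ObstructionTheory F)
    {e e₂ : SmallExtension K} (f : e ⟶ e₂) {a : F.obj e.A} {a₂ : F.obj e₂.A}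
    (h : F.map f.toA a = a₂) (l : Module.Dual K e₂.J) :
    contractEquiv (OT.ob e a) (l ∘ₗ f.onJ) = contractEquiv (OT.ob e₂ a₂) l := by
  rw [← h, OT.base_change e e₂ f.toB f.toA f.w, ← contractEquiv_lTensor, Hom.onJ]

theorem ObstructionTheory.liftable_le_ker_contractEquiv_ob (OT : ObstructionTheory F)
    (hF : IsDeformationFunctor F) (e : SmallExtension K) (a : F.obj e.A) :
    liftable hF e a ≤ LinearMap.ker (contractEquiv (OT.ob e a)) := fun l hl => by
  obtain ⟨l', hl'⟩ := exists_comp_toQuot_onJ (le_refl (LinearMap.ker l))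
  have hob : OT.ob (e.quot (LinearMap.ker l)) a = 0 := OT.ob_eq_zero_of_lifts _ _ hl
  have h := OT.contractEquiv_ob_comp_onJ (e.toQuot (LinearMap.ker l)) (F.map_id_apply _ a) l'
  rwa [hl', hob, map_zero] at h

namespace PointedExtension

/-- The universal obstruction theory, with values in `Space hF`: the obstruction of `a` is the
tensor whose contraction with a functional on `J` is the class of that functional. -/
noncomputable def obstructionTheory (hF : IsDeformationFunctor F) : ObstructionTheory F where
  V := Space hF
  ob e a := contractEquiv.symm (toSpace hF ⟨e, a⟩)
  ob_eq_zero_of_lifts _ _ h :=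
    (LinearEquiv.map_eq_zero_iff _).2 ((toSpace_eq_zero_iff hF).2 h)
  base_change e₁ e₂ αB αA hc a := by
    let f : e₁ ⟶ e₂ := ⟨αB, αA, hc⟩
    rw [LinearEquiv.symm_apply_eq]
    ext l
    rw [contractEquiv_lTensor, LinearEquiv.apply_symm_apply]
    exact (toSpace_comp_onJ hF (p := ⟨e₂, F.map αA a⟩) (q := ⟨e₁, a⟩) ⟨f, rfl⟩ l).symm

theorem contractEquiv_ob (hF : IsDeformationFunctor F) (e : SmallExtension K) (a : F.obj e.A) :
    contractEquiv ((obstructionTheory hF).ob e a) = toSpace hF ⟨e, a⟩ :=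
  LinearEquiv.apply_symm_apply _ _

theorem isMorphism_iff (hF : IsDeformationFunctor F) {OT : ObstructionTheory F}
    {ψ : Space hF →ₗ[K] OT.V} :
    ObstructionTheory.IsMorphism (obstructionTheory hF) OT ψ ↔
      ∀ p : PointedExtension F, ψ ∘ₗ toSpace hF p = contractEquiv (OT.ob p.1 p.2) := by
  have hψ (e : SmallExtension K) (a : F.obj e.A) :
      contractEquiv (LinearMap.rTensor e.J ψ ((obstructionTheory hF).ob e a)) =
        ψ ∘ₗ toSpace hF ⟨e, a⟩ :=
    (contractEquiv_rTensor _ _).trans (congrArg (ψ ∘ₗ ·) (contractEquiv_ob hF e a))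
  exact ⟨fun h p => (hψ p.1 p.2).symm.trans (congrArg contractEquiv (h p.1 p.2).symm),
    fun h e a => contractEquiv.injective ((h ⟨e, a⟩).symm.trans (hψ e a).symm)⟩

theorem existsUnique_isMorphism (hF : IsDeformationFunctor F) (OT : ObstructionTheory F) :
    ∃! ψ : (obstructionTheory hF).V →ₗ[K] OT.V,
      ObstructionTheory.IsMorphism (obstructionTheory hF) OT ψ := by
  obtain ⟨ψ, hψ⟩ := exists_comp_toSpace_eq hF (fun p => contractEquiv (OT.ob p.1 p.2))
    (fun _ _ f l => OT.contractEquiv_ob_comp_onJ f.1 f.2 l)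
    fun p => OT.liftable_le_ker_contractEquiv_ob hF p.1 p.2
  refine ⟨ψ, (isMorphism_iff hF).2 hψ, fun χ hχ => LinearMap.ext fun v => ?_⟩
  obtain ⟨p, l, rfl⟩ := exists_toSpace_eq hF v
  exact LinearMap.congr_fun (((isMorphism_iff hF).1 hχ p).trans (hψ p).symm) l

theorem obstructionTheory_complete (hF : IsDeformationFunctor F) :
    (obstructionTheory hF).Complete := fun e a h =>
  (toSpace_eq_zero_iff hF (p := ⟨e, a⟩)).1 ((LinearEquiv.map_eq_zero_iff _).1 h)

end PointedExtension

section DualNumber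

open TrivSqZeroExt DualNumber

theorem mul_eq_zero_of_eps_dvd {R : Type*} [CommSemiring R] {x y : R[ε]} (hx : ε ∣ x)
    (hy : ε ∣ y) : x * y = 0 := by
  obtain ⟨c, rfl⟩ := hx
  obtain ⟨d, rfl⟩ := hy
  rw [mul_mul_mul_comm, eps_mul_eps, zero_mul]

/-- The trivial extension `0 → K → K[ε] → K → 0`. It represents the zero obstruction by an
extension with one-dimensional kernel. -/
noncomputable def dualNumberExtension (K : Type u) [Field K] : SmallExtension K :=
  haveI : Module.Finite K K[ε] := inferInstanceAs (Module.Finite K (K × K))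
  { B := ArtinAlg.ofAug K[ε] (fstHom K K K)
    A := ArtinAlg.self K
    π := (fstHom K K K : K[ε] →ₐ[K] K)
    surj := fst_surjective
    small := fun _ hx _ hy =>
      mul_eq_zero_of_eps_dvd
        (Ideal.mem_span_singleton.1 (maximalIdeal_eq_span_singleton_eps.le hy))
        (fst_eq_zero_iff_eps_dvd.1 hx) }

theorem lifts_dualNumberExtension (hF : IsDeformationFunctor F) (a : F.obj (ArtinAlg.self K)) :
    (dualNumberExtension K).Lifts a := by
  let i : ArtinAlg.self K ⟶ (dualNumberExtension K).B :=
    (inlAlgHom K K K : K →ₐ[K] K[ε])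
  exact ⟨F.map i a, hF.subsingleton_pt.elim _ _⟩

/-- The identification of the kernel of the trivial extension with `K`. -/
noncomputable def dualNumberKernel (K : Type u) [Field K] : (dualNumberExtension K).J ≃ₗ[K] K :=
  LinearEquiv.ofBijective
    ((sndHom K K : K[ε] →ₗ[K] K) ∘ₗ (dualNumberExtension K).J.subtype)
    ⟨fun x y h => Subtype.ext (TrivSqZeroExt.ext (x.2.trans y.2.symm) h),
      fun a => ⟨⟨(inr a : K[ε]), fst_inr K a⟩, rfl⟩⟩

end DualNumber

theorem exists_toSpace_linearEquiv_eq (hF : IsDeformationFunctor F) (v : Space hF) :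
    ∃ (e : SmallExtension K) (a : F.obj e.A) (j : e.J ≃ₗ[K] K),
      toSpace hF ⟨e, a⟩ j.toLinearMap = v := by
  obtain ⟨p, l, rfl⟩ := exists_toSpace_eq hF v
  by_cases hl : l = 0
  · obtain ⟨a⟩ := hF.nonempty_pt
    refine ⟨dualNumberExtension K, a, dualNumberKernel K, ?_⟩
    rw [hl, map_zero]
    exact LinearMap.congr_fun ((toSpace_eq_zero_iff hF).2 (lifts_dualNumberExtension hF a)) _
  · obtain ⟨l', h⟩ := exists_comp_toQuot_onJ (le_refl (LinearMap.ker l))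
    refine ⟨p.1.quot (LinearMap.ker l), p.2,
      LinearEquiv.ofBijective l' (bijective_of_comp_toQuot_onJ_eq hl h), ?_⟩
    have hq := toSpace_comp_onJ hF (p := ⟨p.1.quot (LinearMap.ker l), p.2⟩) (q := p)
      ⟨p.1.toQuot _, F.map_id_apply _ _⟩ l'
    exact hq.symm.trans (congrArg _ h)

theorem exists_rid_lTensor_ob_eq (hF : IsDeformationFunctor F) (v : (obstructionTheory hF).V) :
    ∃ (e : SmallExtension K) (a : F.obj e.A) (j : e.J ≃ₗ[K] K),
      TensorProduct.rid K _ (LinearMap.lTensor _ j.toLinearMap ((obstructionTheory hF).ob e a))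
        = v := by
  obtain ⟨e, a, j, h⟩ := exists_toSpace_linearEquiv_eq hF v
  refine ⟨e, a, j, ?_⟩
  exact (contractEquiv_apply _ _).symm.trans
    ((LinearMap.congr_fun (contractEquiv_ob hF e a) _).trans h)

end Universal

/-- Every deformation functor `F` admits a universal obstruction theory
`(O_F, ob_e)`.  Moreover the universal obstruction theory is complete, and every element of
`O_F` is of the form `ob_e(a)` for some small extension `e : 0 → K → B → A → 0` with
one-dimensional kernel and some `a ∈ F(A)`. -/
theorem exists_universal_obstructionTheory {K : Type u} [Field K]
    (F : ArtinAlg K ⥤ Type u) (hF : IsDeformationFunctor F) :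
    ∃ OT : ObstructionTheory F,
      (∀ OT' : ObstructionTheory F,
        ∃! ψ : OT.V →ₗ[K] OT'.V, ObstructionTheory.IsMorphism OT OT' ψ) ∧
      OT.Complete ∧
      (∀ v : OT.V, ∃ (e : SmallExtension K) (a : F.obj e.A) (j : (↥e.J) ≃ₗ[K] K),
        (TensorProduct.rid K OT.V) ((LinearMap.lTensor OT.V j.toLinearMap) (OT.ob e a)) = v) :=
  ⟨PointedExtension.obstructionTheory hF, PointedExtension.existsUnique_isMorphism hF,
    PointedExtension.obstructionTheory_complete hF, exists_rid_lTensor_ob_eq hF⟩
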